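/- Fix β > 0 and for f > 0 let ⟨w⟩(f,f,β) = Σ_{i,j=1}^{4} (E_j - E_i)·p(i,j) be the mean work of the two-spin Rabi model evaluated at coupling λ = f. Then ⟨w⟩(f,f,β) is asymptotic to (1/2)·f·sin²(√2·π·f) as f → ∞, in the sense that the difference ⟨w⟩(f,f,β) - (1/2)·f·sin²(√2·π·f) tends to 0 as f → ∞. -/

import Mathlib

open Matrix Complex Real

noncomputable def Amat (l f : ℝ) : Matrix (Fin 4) (Fin 4) ℝ :=
  let α := l / Real.sqrt (f^2 + l^2)
  (1/2 : ℝ) • !![-Real.sqrt (1-α), 1, Real.sqrt (1+α), 1;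
                 -Real.sqrt (1+α), -1, -Real.sqrt (1-α), 1;
                 Real.sqrt (1+α), -1, Real.sqrt (1-α), 1;
                 Real.sqrt (1-α), 1, -Real.sqrt (1+α), 1]

noncomputable def AmatC (l f : ℝ) : Matrix (Fin 4) (Fin 4) ℂ :=
  (Amat l f).map Complex.ofReal

noncomputable def Dmat (l f t : ℝ) : Matrix (Fin 4) (Fin 4) ℂ :=
  Matrix.diagonal
    ![Complex.exp (Complex.I * t * (((2 * Real.sqrt (f^2 + l^2) + l)/4 : ℝ) : ℂ)),
      Complex.exp (Complex.I * t * (((2*f - l)/4 : ℝ) : ℂ)),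
      Complex.exp (Complex.I * t * (((l - 2 * Real.sqrt (f^2 + l^2))/4 : ℝ) : ℂ)),
      Complex.exp (-Complex.I * t * (((2*f + l)/4 : ℝ) : ℂ))]

/-- The monodromy matrix S = A·Δ(2π)·Aᵀ. -/
noncomputable def Smat (l f : ℝ) : Matrix (Fin 4) (Fin 4) ℂ :=
  AmatC l f * Dmat l f (2 * Real.pi) * (AmatC l f)ᵀ

/-- The projectors P₁, P₂, P₃, P₄ onto the eigenstates of the static Hamiltonian H₀. -/
noncomputable def Proj : Fin 4 → Matrix (Fin 4) (Fin 4) ℂ :=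
  ![!![1,0,0,0; 0,0,0,0; 0,0,0,0; 0,0,0,0],
    !![0,0,0,0; 0,0,0,0; 0,0,0,0; 0,0,0,1],
    !![0,0,0,0; 0,1/2,-(1/2),0; 0,-(1/2),1/2,0; 0,0,0,0],
    !![0,0,0,0; 0,1/2,1/2,0; 0,1/2,1/2,0; 0,0,0,0]]

/-- The conditional probabilities π(j|i) = Tr(P_j · S · P_i · S*). -/
noncomputable def condProb (l f : ℝ) (j i : Fin 4) : ℂ :=
  (Proj j * Smat l f * Proj i * (Smat l f)ᴴ).trace

/-- The static energies E₁ = λ/4+1, E₂ = λ/4-1, E₃ = -3λ/4, E₄ = λ/4. -/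
noncomputable def En (l : ℝ) : Fin 4 → ℝ := ![l/4 + 1, l/4 - 1, -(3*l/4), l/4]

/-- The partition function Z = Σₙ e^{-βEₙ}. -/
noncomputable def Zpart (l β : ℝ) : ℝ := ∑ n : Fin 4, Real.exp (-β * En l n)

/-- The joint two-measurement probabilities p(i,j) = (e^{-βE_i}/Z)·Tr(P_j·S·P_i·S*). -/
noncomputable def jointProb (l f β : ℝ) (i j : Fin 4) : ℂ :=
  ((Real.exp (-β * En l i) / Zpart l β : ℝ) : ℂ) *
    (Proj j * Smat l f * Proj i * (Smat l f)ᴴ).trace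

/-- The mean work ⟨w⟩(f,f,β) of the two-spin Rabi model at coupling λ = f. -/
noncomputable def meanWork (f β : ℝ) : ℂ :=
  ∑ i : Fin 4, ∑ j : Fin 4, ((En f j - En f i : ℝ) : ℂ) * jointProb f f β i j

/-
The evolution `S` is unitary and the `Pⱼ` are a resolution of the identity, so for every initial
level `i` the numbers `π(·|i)` form a probability vector, and the work conditioned on starting in
`i` is at most the spread `f + 2` of the spectrum. The level `E₃` lies below the others by at least
`f - 1`, so the thermal average differs from the work conditioned on starting in `E₃` by
`O(f e^{-βf})`. That conditional work is explicit: `S` sends the singlet, which spans the range of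
`P₃`, to a vector `(u, w, -w, -u)`. This vector is orthogonal to the range of `P₄` and has weight
`|u|² / 2` in each of `P₁` and `P₂`, where `|u| = f / √(f² + λ²) · |sin (π √(f² + λ²))|`.
-/

section TransitionTrace

variable {m n : Type*} [Fintype m] [Fintype n]

open scoped ComplexOrder in
lemma trace_mul_mul_mul_conjTranspose_nonneg {𝕜 : Type*} [RCLike 𝕜]
    {P : Matrix m m 𝕜} {Q : Matrix n n 𝕜} (hP : IsStarProjection P) (hQ : IsStarProjection Q)
    (S : Matrix m n 𝕜) : 0 ≤ (P * S * Q * Sᴴ).trace := by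
  have hPH : Pᴴ = P := hP.isSelfAdjoint
  have hQH : Qᴴ = Q := hQ.isSelfAdjoint
  have h_factor : (P * S * Q * Sᴴ).trace = ((P * S * Q) * (P * S * Q)ᴴ).trace :=
    calc (P * S * Q * Sᴴ).trace = (P * P * (S * (Q * Q) * Sᴴ)).trace := by
          rw [hP.isIdempotentElem.eq, hQ.isIdempotentElem.eq]
          simp only [Matrix.mul_assoc]
      _ = (P * (S * (Q * Q) * Sᴴ) * P).trace := by
          rw [Matrix.mul_assoc P P, Matrix.trace_mul_comm P]
      _ = ((P * S * Q) * (P * S * Q)ᴴ).trace := by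
          simp only [conjTranspose_mul, hPH, hQH, Matrix.mul_assoc]
  exact h_factor ▸ (posSemidef_self_mul_conjTranspose _).trace_nonneg

lemma sum_trace_mul_mul_mul_conjTranspose {ι R : Type*} [Fintype ι] [CommRing R] [StarRing R]
    [DecidableEq m] [DecidableEq n] {P : ι → Matrix m m R} (hP : ∑ j, P j = 1) {S : Matrix m n R}
    (hS : Sᴴ * S = 1) (Q : Matrix n n R) : ∑ j, (P j * S * Q * Sᴴ).trace = Q.trace := by
  rw [← trace_sum, ← Matrix.sum_mul, ← Matrix.sum_mul, ← Matrix.sum_mul, hP, Matrix.one_mul,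
    Matrix.trace_mul_comm, ← Matrix.mul_assoc, hS, Matrix.one_mul]

lemma trace_mul_mul_vecMulVec_mul_conjTranspose {R : Type*} [CommRing R] [StarRing R]
    (P : Matrix m m R) (S : Matrix m n R) (v : n → R) :
    (P * S * vecMulVec v (star v) * Sᴴ).trace = P *ᵥ (S *ᵥ v) ⬝ᵥ star (S *ᵥ v) := by
  rw [mul_vecMulVec, vecMulVec_mul, trace_vecMulVec, star_mulVec, mulVec_mulVec]

end TransitionTrace

section GibbsWeight

variable {ι : Type*} [Fintype ι]

/-- The probability `e^{-β Eᵢ} / Z` of the level `i` in the thermal state with energies `E` at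
inverse temperature `β`. -/
noncomputable def gibbsWeight (E : ι → ℝ) (β : ℝ) (i : ι) : ℝ :=
  Real.exp (-β * E i) / ∑ n, Real.exp (-β * E n)

lemma gibbsWeight_nonneg (E : ι → ℝ) (β : ℝ) (i : ι) : 0 ≤ gibbsWeight E β i := by
  unfold gibbsWeight
  positivity

lemma sum_gibbsWeight [Nonempty ι] (E : ι → ℝ) (β : ℝ) : ∑ i, gibbsWeight E β i = 1 := by
  simp only [gibbsWeight, ← Finset.sum_div]
  exact div_self (by positivity)

lemma gibbsWeight_le_exp (E : ι → ℝ) (β : ℝ) (i k : ι) :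
    gibbsWeight E β i ≤ Real.exp (-β * (E i - E k)) :=
  calc gibbsWeight E β i ≤ Real.exp (-β * E i) / Real.exp (-β * E k) := by
        unfold gibbsWeight
        gcongr
        exact Finset.single_le_sum (f := fun n => Real.exp (-β * E n))
          (fun _ _ => (Real.exp_pos _).le) (Finset.mem_univ k)
    _ = Real.exp (-β * (E i - E k)) := by rw [← Real.exp_sub, mul_sub]

lemma norm_sum_gibbsWeight_smul_sub_le {V : Type*} [NormedAddCommGroup V] [NormedSpace ℝ V]
    {E : ι → ℝ} {β g C : ℝ} {x : ι → V} {k : ι} (hβ : 0 ≤ β) (h_gap : ∀ i ≠ k, g ≤ E i - E k)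
    (hx : ∀ i, ‖x i - x k‖ ≤ C) :
    ‖∑ i, gibbsWeight E β i • x i - x k‖ ≤ Fintype.card ι * (Real.exp (-β * g) * C) := by
  have : Nonempty ι := ⟨k⟩
  have h_centre : ∑ i, gibbsWeight E β i • x i - x k = ∑ i, gibbsWeight E β i • (x i - x k) := by
    simp only [smul_sub, Finset.sum_sub_distrib, ← Finset.sum_smul, sum_gibbsWeight, one_smul]
  have hC : 0 ≤ C := (norm_nonneg _).trans (hx k)
  have h_term (i : ι) : ‖gibbsWeight E β i • (x i - x k)‖ ≤ Real.exp (-β * g) * C := by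
    rcases eq_or_ne i k with rfl | hik
    · rw [sub_self, smul_zero, norm_zero]
      positivity
    · rw [norm_smul, Real.norm_of_nonneg (gibbsWeight_nonneg E β i)]
      gcongr
      · refine (gibbsWeight_le_exp E β i k).trans (Real.exp_le_exp.2 ?_)
        exact mul_le_mul_of_nonpos_left (h_gap i hik) (neg_nonpos.2 hβ)
      · exact hx i
  calc ‖∑ i, gibbsWeight E β i • x i - x k‖ = ‖∑ i, gibbsWeight E β i • (x i - x k)‖ := by
        rw [h_centre]
    _ ≤ ∑ _i : ι, Real.exp (-β * g) * C := norm_sum_le_of_le _ fun i _ => h_term i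
    _ = Fintype.card ι * (Real.exp (-β * g) * C) := by simp

end GibbsWeight

lemma tendsto_exp_neg_mul_sub_mul_add_atTop_nhds_zero {β : ℝ} (hβ : 0 < β) (c d : ℝ) :
    Filter.Tendsto (fun x => Real.exp (-β * (x - c)) * (x + d)) Filter.atTop (nhds 0) := by
  have h_linear : Filter.Tendsto (fun x => x * Real.exp (-β * x)) Filter.atTop (nhds 0) := by
    simpa only [Real.rpow_one] using tendsto_rpow_mul_exp_neg_mul_atTop_nhds_zero 1 β hβ
  have h_const : Filter.Tendsto (fun x => Real.exp (-β * x)) Filter.atTop (nhds 0) :=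
    Real.tendsto_exp_atBot.comp (Filter.tendsto_id.const_mul_atTop_of_neg (neg_neg_of_pos hβ))
  have h_sum := (h_linear.add (h_const.const_mul d)).const_mul (Real.exp (β * c))
  rw [mul_zero, add_zero, mul_zero] at h_sum
  refine h_sum.congr fun x => ?_
  rw [show -β * (x - c) = β * c + -β * x by ring, Real.exp_add]
  ring

/-- The parameter `α = λ / √(f² + λ²)`. -/
noncomputable def mixingParam (l f : ℝ) : ℝ := l / √(f ^ 2 + l ^ 2)

lemma abs_mixingParam_le_one (l f : ℝ) : |mixingParam l f| ≤ 1 := by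
  rw [mixingParam, abs_div, abs_of_nonneg (Real.sqrt_nonneg _)]
  exact div_le_one_of_le₀ (Real.abs_le_sqrt (by linarith [sq_nonneg f])) (Real.sqrt_nonneg _)

lemma one_sub_mixingParam_nonneg (l f : ℝ) : 0 ≤ 1 - mixingParam l f :=
  sub_nonneg.2 (abs_le.1 (abs_mixingParam_le_one l f)).2

lemma one_add_mixingParam_nonneg (l f : ℝ) : 0 ≤ 1 + mixingParam l f := by
  linarith [(abs_le.1 (abs_mixingParam_le_one l f)).1]

lemma one_sub_mixingParam_sq {l f : ℝ} (h : f ^ 2 + l ^ 2 ≠ 0) :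
    1 - mixingParam l f ^ 2 = f ^ 2 / (f ^ 2 + l ^ 2) := by
  rw [mixingParam, div_pow, Real.sq_sqrt (by positivity)]
  field_simp
  ring

lemma Amat_eq (l f : ℝ) :
    Amat l f = (1 / 2 : ℝ) •
      !![-√(1 - mixingParam l f), 1, √(1 + mixingParam l f), 1;
         -√(1 + mixingParam l f), -1, -√(1 - mixingParam l f), 1;
         √(1 + mixingParam l f), -1, √(1 - mixingParam l f), 1;
         √(1 - mixingParam l f), 1, -√(1 + mixingParam l f), 1] :=
  rfl

lemma Amat_transpose_mul_self (l f : ℝ) : (Amat l f)ᵀ * Amat l f = 1 := by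
  have h_sub := Real.mul_self_sqrt (one_sub_mixingParam_nonneg l f)
  have h_add := Real.mul_self_sqrt (one_add_mixingParam_nonneg l f)
  rw [Amat_eq]
  ext i j
  fin_cases i <;> fin_cases j <;> simp [Matrix.mul_apply, Fin.sum_univ_four] <;> linarith

lemma AmatC_conjTranspose (l f : ℝ) : (AmatC l f)ᴴ = (AmatC l f)ᵀ := by
  ext i j
  simp [AmatC]

lemma AmatC_mem_unitaryGroup (l f : ℝ) : AmatC l f ∈ unitaryGroup (Fin 4) ℂ := by
  rw [mem_unitaryGroup_iff', star_eq_conjTranspose, AmatC_conjTranspose]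
  calc (AmatC l f)ᵀ * AmatC l f = ((Amat l f)ᵀ * Amat l f).map Complex.ofRealHom := by
        rw [Matrix.map_mul]
        rfl
    _ = 1 := by rw [Amat_transpose_mul_self, Matrix.map_one _ (map_zero _) (map_one _)]

lemma Dmat_mem_unitaryGroup (l f t : ℝ) : Dmat l f t ∈ unitaryGroup (Fin 4) ℂ := by
  rw [mem_unitaryGroup_iff', star_eq_conjTranspose, Dmat, diagonal_conjTranspose,
    diagonal_mul_diagonal, ← diagonal_one]
  congr 1
  ext i
  rw [Pi.star_apply, Complex.star_def, Complex.conj_mul']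
  fin_cases i <;> simp [Complex.norm_exp]

lemma Smat_mem_unitaryGroup (l f : ℝ) : Smat l f ∈ unitaryGroup (Fin 4) ℂ := by
  rw [Smat, ← AmatC_conjTranspose]
  exact mul_mem (mul_mem (AmatC_mem_unitaryGroup l f) (Dmat_mem_unitaryGroup l f (2 * π)))
    (Unitary.star_mem (AmatC_mem_unitaryGroup l f))

lemma isStarProjection_Proj (i : Fin 4) : IsStarProjection (Proj i) := by
  constructor
  · ext j k
    fin_cases i <;> fin_cases j <;> fin_cases k <;>
      simp [Proj, Matrix.mul_apply, Fin.sum_univ_four] <;> norm_num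
  · ext j k
    fin_cases i <;> fin_cases j <;> fin_cases k <;> simp [Proj]

lemma sum_Proj : ∑ i, Proj i = 1 := by
  ext j k
  fin_cases j <;> fin_cases k <;> simp [Proj, Fin.sum_univ_four] <;> norm_num

lemma trace_Proj (i : Fin 4) : (Proj i).trace = 1 := by
  fin_cases i <;> simp [Proj, Matrix.trace, Fin.sum_univ_four] <;> norm_num

lemma sum_norm_condProb (l f : ℝ) (i : Fin 4) : ∑ j, ‖condProb l f j i‖ = 1 := by
  have h_norm (j : Fin 4) : (‖condProb l f j i‖ : ℂ) = condProb l f j i :=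
    Complex.norm_of_nonneg' <| trace_mul_mul_mul_conjTranspose_nonneg
      (isStarProjection_Proj j) (isStarProjection_Proj i) (Smat l f)
  have h_sum : ∑ j, condProb l f j i = 1 := by
    simp only [condProb]
    rw [sum_trace_mul_mul_mul_conjTranspose sum_Proj
      (mem_unitaryGroup_iff'.1 (Smat_mem_unitaryGroup l f)), trace_Proj]
  exact_mod_cast (by simpa only [h_norm] using h_sum : ∑ j, (‖condProb l f j i‖ : ℂ) = 1)

/-- The mean work conditioned on the first energy measurement giving the level `i`. -/
noncomputable def condWork (l f : ℝ) (i : Fin 4) : ℂ :=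
  ∑ j, ((En l j - En l i : ℝ) : ℂ) * condProb l f j i

lemma meanWork_eq_sum_gibbsWeight_smul_condWork (f β : ℝ) :
    meanWork f β = ∑ i, gibbsWeight (En f) β i • condWork f f i := by
  simp only [meanWork, jointProb, condWork, condProb, gibbsWeight, Zpart, Complex.real_smul,
    Finset.mul_sum, mul_left_comm]

lemma abs_En_sub_En_le {l : ℝ} (hl : 0 ≤ l) (i j : Fin 4) : |En l j - En l i| ≤ l + 2 := by
  rw [abs_le]
  fin_cases i <;> fin_cases j <;> simp [En] <;> constructor <;> linarith

lemma sub_one_le_En_sub_En_two (l : ℝ) {i : Fin 4} (hi : i ≠ 2) : l - 1 ≤ En l i - En l 2 := by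
  fin_cases i <;> simp [En] at hi ⊢ <;> linarith

lemma norm_condWork_le {l : ℝ} (hl : 0 ≤ l) (f : ℝ) (i : Fin 4) : ‖condWork l f i‖ ≤ l + 2 :=
  calc ‖condWork l f i‖ ≤ ∑ j, (l + 2) * ‖condProb l f j i‖ := by
        refine norm_sum_le_of_le _ fun j _ => ?_
        rw [norm_mul, Complex.norm_real, Real.norm_eq_abs]
        gcongr
        exact abs_En_sub_En_le hl i j
    _ = l + 2 := by rw [← Finset.mul_sum, sum_norm_condProb, mul_one]

/-- The unnormalised singlet, which spans the range of `Proj 2`. -/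
def singlet : Fin 4 → ℂ := ![0, 1, -1, 0]

lemma Proj_two_eq : Proj 2 = (1 / 2 : ℂ) • vecMulVec singlet (star singlet) := by
  ext i j
  fin_cases i <;> fin_cases j <;> simp [Proj, singlet, -cons_vecMulVec, vecMulVec_apply]

/-- The amplitude of the first basis vector in the image of the unnormalised `singlet` under
`Smat`. -/
noncomputable def flipAmplitude (l f : ℝ) : ℂ :=
  Complex.exp ((π * l / 2 : ℝ) * I) * I *
    (√(1 - mixingParam l f) * √(1 + mixingParam l f) * Real.sin (π * √(f ^ 2 + l ^ 2)) : ℝ)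

lemma Dmat_zero_sub_Dmat_two (l f : ℝ) :
    Dmat l f (2 * π) 0 0 - Dmat l f (2 * π) 2 2 =
      2 * (Complex.exp ((π * l / 2 : ℝ) * I) * I * (Real.sin (π * √(f ^ 2 + l ^ 2)) : ℝ)) := by
  set θ := π * √(f ^ 2 + l ^ 2) with hθ
  have h_zero : Dmat l f (2 * π) 0 0 =
      Complex.exp ((π * l / 2 : ℝ) * I) * Complex.exp (θ * I) := by
    rw [← Complex.exp_add, hθ, Dmat, diagonal_apply_eq]
    simp only [cons_val_zero]
    push_cast
    ring_nf
  have h_two : Dmat l f (2 * π) 2 2 =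
      Complex.exp ((π * l / 2 : ℝ) * I) * Complex.exp (-θ * I) := by
    rw [← Complex.exp_add, hθ, Dmat, diagonal_apply_eq]
    simp only [cons_val]
    push_cast
    ring_nf
  rw [h_zero, h_two, Complex.ofReal_sin]
  linear_combination -(Complex.exp ((π * l / 2 : ℝ) * I) * I) * Complex.two_sin (θ : ℂ) +
    Complex.exp ((π * l / 2 : ℝ) * I) * (Complex.exp (θ * I) - Complex.exp (-θ * I)) * I_sq

lemma AmatC_transpose_mulVec_singlet (l f : ℝ) :
    (AmatC l f)ᵀ *ᵥ singlet =
      ![-(√(1 + mixingParam l f) : ℂ), 0, -(√(1 - mixingParam l f) : ℂ), 0] := by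
  rw [AmatC, Amat_eq]
  ext i
  fin_cases i <;> simp [singlet, mulVec, dotProduct, Fin.sum_univ_four] <;> ring

lemma exists_Smat_mulVec_singlet (l f : ℝ) :
    ∃ w, Smat l f *ᵥ singlet = ![flipAmplitude l f, w, -w, -flipAmplitude l f] := by
  set a : ℝ := √(1 - mixingParam l f) with ha
  set b : ℝ := √(1 + mixingParam l f) with hb
  set d := fun i => Dmat l f (2 * π) i i
  have h_phase : Dmat l f (2 * π) *ᵥ ![-(b : ℂ), 0, -(a : ℂ), 0] =
      ![-(d 0 * b), 0, -(d 2 * a), 0] := by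
    ext i
    fin_cases i <;> simp [d, Dmat, mulVec_diagonal]
  have h_amp : flipAmplitude l f = a * b * (d 0 - d 2) / 2 := by
    rw [Dmat_zero_sub_Dmat_two, flipAmplitude]
    push_cast
    ring
  refine ⟨(b * b * d 0 + a * a * d 2) / 2, ?_⟩
  rw [Smat, ← mulVec_mulVec, ← mulVec_mulVec, AmatC_transpose_mulVec_singlet, h_phase, h_amp,
    AmatC, Amat_eq, ← ha, ← hb]
  ext i
  fin_cases i <;> simp [mulVec, dotProduct, Fin.sum_univ_four] <;> ring

lemma flipAmplitude_mul_star {l f : ℝ} (h : f ^ 2 + l ^ 2 ≠ 0) :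
    flipAmplitude l f * star (flipAmplitude l f) =
      (f ^ 2 / (f ^ 2 + l ^ 2) * Real.sin (π * √(f ^ 2 + l ^ 2)) ^ 2 : ℝ) := by
  have h_mixing : (√(1 - mixingParam l f) * √(1 + mixingParam l f)) ^ 2 =
      f ^ 2 / (f ^ 2 + l ^ 2) := by
    rw [mul_pow, Real.sq_sqrt (one_sub_mixingParam_nonneg l f),
      Real.sq_sqrt (one_add_mixingParam_nonneg l f), ← one_sub_mixingParam_sq h]
    ring
  rw [Complex.star_def, Complex.mul_conj', flipAmplitude, norm_mul, norm_mul,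
    Complex.norm_exp_ofReal_mul_I, Complex.norm_I, one_mul, one_mul, Complex.norm_real,
    Real.norm_eq_abs, ← Complex.ofReal_pow, sq_abs, mul_pow, h_mixing]

lemma condProb_two_eq (l f : ℝ) (j : Fin 4) :
    condProb l f j 2 =
      (1 / 2) * (Proj j *ᵥ (Smat l f *ᵥ singlet) ⬝ᵥ star (Smat l f *ᵥ singlet)) := by
  rw [condProb, Proj_two_eq, Matrix.mul_smul, Matrix.smul_mul, trace_smul,
    trace_mul_mul_vecMulVec_mul_conjTranspose, smul_eq_mul]

lemma condWork_two {l f : ℝ} (h : f ^ 2 + l ^ 2 ≠ 0) :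
    condWork l f 2 = (l * (f ^ 2 / (f ^ 2 + l ^ 2)) * Real.sin (π * √(f ^ 2 + l ^ 2)) ^ 2 : ℝ) := by
  obtain ⟨w, hw⟩ := exists_Smat_mulVec_singlet l f
  set u := flipAmplitude l f
  have h_zero : condProb l f 0 2 = 1 / 2 * (u * star u) := by
    rw [condProb_two_eq, hw]
    simp [Proj, mulVec, dotProduct, Fin.sum_univ_four]
  have h_one : condProb l f 1 2 = 1 / 2 * (u * star u) := by
    rw [condProb_two_eq, hw]
    simp [Proj, mulVec, dotProduct, Fin.sum_univ_four]
  have h_three : condProb l f 3 2 = 0 := by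
    rw [condProb_two_eq, hw]
    simp [Proj, mulVec, dotProduct, Fin.sum_univ_four]
  calc condWork l f 2 = l * (u * star u) := by
        rw [condWork, Fin.sum_univ_four, h_zero, h_one, h_three]
        simp [En]
        ring
    _ = (l * (f ^ 2 / (f ^ 2 + l ^ 2)) * Real.sin (π * √(f ^ 2 + l ^ 2)) ^ 2 : ℝ) := by
        rw [flipAmplitude_mul_star h]
        push_cast
        ring

lemma condWork_self_two {f : ℝ} (hf : 0 < f) :
    condWork f f 2 = ((1 / 2) * f * Real.sin (√2 * π * f) ^ 2 : ℝ) := by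
  have h_sqrt : √(f ^ 2 + f ^ 2) = √2 * f := by
    rw [← two_mul, Real.sqrt_mul zero_le_two, Real.sqrt_sq hf.le]
  have h_half : f * (f ^ 2 / (f ^ 2 + f ^ 2)) = 1 / 2 * f := by
    field_simp
    norm_num
  rw [condWork_two (by positivity), h_sqrt, h_half, mul_left_comm π, ← mul_assoc]

lemma norm_meanWork_sub_condWork_two_le {f β : ℝ} (hf : 0 ≤ f) (hβ : 0 ≤ β) :
    ‖meanWork f β - condWork f f 2‖ ≤ 8 * (Real.exp (-β * (f - 1)) * (f + 2)) := by
  have h_diff (i : Fin 4) : ‖condWork f f i - condWork f f 2‖ ≤ 2 * (f + 2) :=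
    calc ‖condWork f f i - condWork f f 2‖ ≤ (f + 2) + (f + 2) :=
          norm_sub_le_of_le (norm_condWork_le hf f i) (norm_condWork_le hf f 2)
      _ = 2 * (f + 2) := (two_mul _).symm
  calc ‖meanWork f β - condWork f f 2‖ ≤
        Fintype.card (Fin 4) * (Real.exp (-β * (f - 1)) * (2 * (f + 2))) := by
        rw [meanWork_eq_sum_gibbsWeight_smul_condWork]
        exact norm_sum_gibbsWeight_smul_sub_le (k := 2) hβ
          (fun _ hi => sub_one_le_En_sub_En_two f hi) h_diff
    _ = 8 * (Real.exp (-β * (f - 1)) * (f + 2)) := by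
        rw [Fintype.card_fin]
        push_cast
        ring

/-- for fixed β > 0 the mean work at λ = f is asymptotic to
(1/2)·f·sin²(√2·π·f) as f → ∞. -/
theorem two_spin_Rabi_mean_work_asymptotics (β : ℝ) (hβ : 0 < β) :
    Filter.Tendsto
      (fun f : ℝ => meanWork f β -
        (((1/2) * f * Real.sin (Real.sqrt 2 * Real.pi * f)^2 : ℝ) : ℂ))
      Filter.atTop (nhds 0) := by
  have h_bound : Filter.Tendsto (fun f : ℝ => 8 * (Real.exp (-β * (f - 1)) * (f + 2)))
      Filter.atTop (nhds 0) := by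
    simpa only [mul_zero] using
      (tendsto_exp_neg_mul_sub_mul_add_atTop_nhds_zero hβ 1 2).const_mul 8
  refine squeeze_zero_norm' ?_ h_bound
  filter_upwards [Filter.eventually_gt_atTop 0] with f hf
  rw [← condWork_self_two hf]
  exact norm_meanWork_sub_condWork_two_le hf.le hβ.le
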